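/- arXiv:1703.04972 — 4 statements merged into one kernel-verified Lean document; each statement's English description precedes it below -/
import Mathlib

section
/- Let Δ_P be the Hantzsche–Wendt group and let α, β be any pair of elements generating Δ_P. Set γ = αβ, a = α², b = β², c = γ². Then a, b, c pairwise commute, and moreover β⁻¹aβ = a⁻¹, γ⁻¹aγ = a⁻¹, α⁻¹bα = b⁻¹, γ⁻¹bγ = b⁻¹, α⁻¹cα = c⁻¹, and β⁻¹cβ = c⁻¹. -/
open FreeGroup in
/-- Relators of the Hantzsche–Wendt group: `x⁻¹y²xy²` and `y⁻¹x²yx²`,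
encoding the relations `x⁻¹y²x = y⁻²` and `y⁻¹x²y = x⁻²`. -/
def hwRels : Set (FreeGroup (Fin 2)) :=
  {(of 0)⁻¹ * of 1 ^ 2 * of 0 * of 1 ^ 2,
   (of 1)⁻¹ * of 0 ^ 2 * of 1 * of 0 ^ 2}

/-- The Hantzsche–Wendt group `Δ_P = ⟨x, y ∣ x⁻¹y²x = y⁻², y⁻¹x²y = x⁻²⟩`. -/
abbrev HantzscheWendtGroup : Type := PresentedGroup hwRels

/-- The generator `x` of the Hantzsche–Wendt group. -/
def hwX : HantzscheWendtGroup := PresentedGroup.of 0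

/-- The generator `y` of the Hantzsche–Wendt group. -/
def hwY : HantzscheWendtGroup := PresentedGroup.of 1

/-- `HwP A B C g`: `g` behaves like an element of the coset of a root of `A`. -/
def HwP {G : Type*} [Group G] (A B C g : G) : Prop :=
  g ^ 2 ∈ Subgroup.zpowers A ∧ SemiconjBy g A A ∧ SemiconjBy g B B⁻¹ ∧ SemiconjBy g C C⁻¹

section HwAux
variable {G : Type*} [Group G]

theorem HwP.swap {A B C g : G} (h : HwP A B C g) : HwP A C B g :=
  ⟨h.1, h.2.1, h.2.2.2, h.2.2.1⟩

theorem HwP.mulA {A B C g : G} (hAB : Commute A B) (hAC : Commute A C)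
    (h : HwP A B C g) (i : ℤ) : HwP A B C (A ^ i * g) := by
  obtain ⟨h1, h2, h3, h4⟩ := h
  refine ⟨?_, ?_, ?_, ?_⟩
  · have e : (A ^ i * g) ^ 2 = A ^ i * A ^ i * g ^ 2 := by
      have := (h2.zpow_right i).eq
      rw [pow_two, pow_two, mul_assoc, ← mul_assoc g, this]; group
    rw [e]
    exact mul_mem (mul_mem ⟨i, rfl⟩ ⟨i, rfl⟩) h1
  · exact SemiconjBy.mul_left ((Commute.refl A).zpow_left i) h2
  · exact SemiconjBy.mul_left (hAB.inv_right.zpow_left i) h3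
  · exact SemiconjBy.mul_left (hAC.inv_right.zpow_left i) h4

theorem HwP.mulB {A B C g : G} (hAB : Commute A B) (hBC : Commute B C)
    (h : HwP A B C g) (i : ℤ) : HwP A B C (B ^ i * g) := by
  obtain ⟨h1, h2, h3, h4⟩ := h
  refine ⟨?_, ?_, ?_, ?_⟩
  · have e : (B ^ i * g) ^ 2 = g ^ 2 := by
      have := (h3.zpow_right i).eq
      rw [pow_two, pow_two, mul_assoc, ← mul_assoc g, this]; group
    rwa [e]
  · exact SemiconjBy.mul_left (hAB.symm.zpow_left i) h2
  · exact SemiconjBy.mul_left ((Commute.refl B).inv_right.zpow_left i) h3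
  · exact SemiconjBy.mul_left (hBC.inv_right.zpow_left i) h4

theorem HwP.mulM {A B C : G} (hAB : Commute A B) (hAC : Commute A C) (hBC : Commute B C)
    {m : G} (hm : m ∈ Subgroup.closure ({A, B, C} : Set G)) :
    ∀ g, HwP A B C g ↔ HwP A B C (m * g) := by
  have aux : ∀ u : G, (∀ g, HwP A B C g → ∀ i : ℤ, HwP A B C (u ^ i * g)) →
      ∀ g, HwP A B C g ↔ HwP A B C (u * g) := by
    intro u hu g
    constructor
    · intro h; simpa using hu g h 1
    · intro h; simpa using hu _ h (-1)
  induction hm using Subgroup.closure_induction with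
  | mem u hu =>
    apply aux
    intro g h i
    rcases hu with rfl | rfl | rfl
    · exact h.mulA hAB hAC i
    · exact h.mulB hAB hBC i
    · exact (h.swap.mulB hAC hBC.symm i).swap
  | one => simp
  | mul u v _ _ hu hv => intro g; rw [hv g, hu, mul_assoc]
  | inv u _ hu => intro g; rw [hu (u⁻¹ * g)]; simp

/-- The conclusion for a pair. -/
def HwR (s t : G) : Prop :=
  Commute (s ^ 2) (t ^ 2) ∧ t⁻¹ * s ^ 2 * t = (s ^ 2)⁻¹ ∧ s⁻¹ * t ^ 2 * s = (t ^ 2)⁻¹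

theorem HwR.symm {s t : G} (h : HwR s t) : HwR t s := ⟨h.1.symm, h.2.2, h.2.1⟩

theorem hw_conj_inv {t A : G} (h : SemiconjBy t A A⁻¹) {u : G} (hu : u ∈ Subgroup.zpowers A) :
    t⁻¹ * u * t = u⁻¹ := by
  obtain ⟨i, rfl⟩ := hu
  have := (h.zpow_right (-i)).eq
  simp only [zpow_neg, inv_zpow, inv_inv] at this
  simp only [mul_assoc]
  rw [← this]; group

theorem HwR.of {A B C s t : G} (hAB : Commute A B) (hs : HwP A B C s) (ht : HwP B A C t) :
    HwR s t := by
  refine ⟨?_, hw_conj_inv ht.2.2.1 hs.1, hw_conj_inv hs.2.2.1 ht.1⟩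
  obtain ⟨i, hi⟩ := hs.1
  obtain ⟨j, hj⟩ := ht.1
  simp only at hi hj
  rw [← hi, ← hj]
  exact hAB.zpow_zpow i j

theorem hw_basic {x y : G} (h1 : SemiconjBy x (y ^ 2) (y ^ 2)⁻¹)
    (h2 : SemiconjBy y (x ^ 2) (x ^ 2)⁻¹) :
    Commute (x ^ 2) (y ^ 2) ∧ Commute (x ^ 2) ((x * y) ^ 2) ∧ Commute (y ^ 2) ((x * y) ^ 2) ∧
    HwP (x ^ 2) (y ^ 2) ((x * y) ^ 2) x ∧ HwP (y ^ 2) (x ^ 2) ((x * y) ^ 2) y ∧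
    HwP ((x * y) ^ 2) (x ^ 2) (y ^ 2) (x * y) := by
  have xx : SemiconjBy x (x ^ 2) (x ^ 2) := (Commute.refl x).pow_right 2
  have yy : SemiconjBy y (y ^ 2) (y ^ 2) := (Commute.refl y).pow_right 2
  have zx : SemiconjBy (x * y) (x ^ 2) (x ^ 2)⁻¹ := SemiconjBy.mul_left xx.inv_right h2
  have zy : SemiconjBy (x * y) (y ^ 2) (y ^ 2)⁻¹ := SemiconjBy.mul_left h1 yy
  have zx' := zx.inv_right
  have zy' := zy.inv_right
  have h1' := h1.inv_right
  rw [inv_inv] at zx' zy' h1'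
  have cAB : Commute (x ^ 2) (y ^ 2) := by
    have := SemiconjBy.mul_left h1' h1
    rwa [← pow_two] at this
  have cAC : Commute ((x * y) ^ 2) (x ^ 2) := by
    have := SemiconjBy.mul_left zx' zx
    rwa [← pow_two] at this
  have cBC : Commute ((x * y) ^ 2) (y ^ 2) := by
    have := SemiconjBy.mul_left zy' zy
    rwa [← pow_two] at this
  have key : x ^ 2 * y * x * y * (y * x * y) = 1 := by
    calc x ^ 2 * y * x * y * (y * x * y) = x ^ 2 * y * (x * y ^ 2) * x * y := by
          simp only [pow_two, mul_assoc]
      _ = x ^ 2 * (y * (y ^ 2)⁻¹) * x ^ 2 * y := by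
          rw [h1.eq]; simp only [pow_two, mul_assoc]
      _ = x ^ 2 * (y ^ 2)⁻¹ * (y * x ^ 2) * y := by
          rw [yy.inv_right.eq]; simp only [mul_assoc]
      _ = (x ^ 2 * (y ^ 2)⁻¹) * (x ^ 2)⁻¹ * y ^ 2 := by
          rw [h2.eq]; simp only [pow_two, mul_assoc]
      _ = 1 := by
          rw [cAB.inv_right.eq]; group
  have xC : SemiconjBy x ((x * y) ^ 2) ((x * y) ^ 2)⁻¹ := by
    have e : x * (x * y) ^ 2 = (y * x * y)⁻¹ := by
      rw [eq_inv_iff_mul_eq_one, ← key]; simp only [pow_two, mul_assoc]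
    rw [SemiconjBy, e]; simp only [pow_two, mul_inv_rev, mul_assoc]; group
  have zC : SemiconjBy (x * y) ((x * y) ^ 2) ((x * y) ^ 2) := (Commute.refl _).pow_right 2
  have yC : SemiconjBy y ((x * y) ^ 2) ((x * y) ^ 2)⁻¹ := by
    have hi := xC.inv_symm_left.inv_right
    rw [inv_inv] at hi
    have := SemiconjBy.mul_left hi zC
    have e : x⁻¹ * (x * y) = y := by group
    simpa [e] using this
  exact ⟨cAB, cAC.symm, cBC.symm, ⟨⟨1, by simp⟩, xx, h1, xC⟩, ⟨⟨1, by simp⟩, yy, h2, yC⟩,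
    ⟨⟨1, by simp⟩, zC, zx, zy⟩⟩

/-- The translation lattice. -/
def hwM (x y : G) : Subgroup G := Subgroup.closure {x ^ 2, y ^ 2, (x * y) ^ 2}

/-- Membership in one of the four cosets. -/
def HwCos (x y g : G) : Prop :=
  ∃ m ∈ hwM x y, g = m ∨ g = m * x ∨ g = m * y ∨ g = m * (x * y)

theorem hw_conj_mem {x y t : G}
    (hA : SemiconjBy t (x ^ 2) (x ^ 2) ∨ SemiconjBy t (x ^ 2) (x ^ 2)⁻¹)
    (hB : SemiconjBy t (y ^ 2) (y ^ 2) ∨ SemiconjBy t (y ^ 2) (y ^ 2)⁻¹)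
    (hC : SemiconjBy t ((x * y) ^ 2) ((x * y) ^ 2) ∨ SemiconjBy t ((x * y) ^ 2) ((x * y) ^ 2)⁻¹)
    {m : G} (hm : m ∈ hwM x y) : ∃ n ∈ hwM x y, t * m = n * t := by
  have aux : ∀ u ∈ hwM x y, (SemiconjBy t u u ∨ SemiconjBy t u u⁻¹) →
      ∃ n ∈ hwM x y, t * u = n * t := by
    rintro u hu (h | h)
    · exact ⟨u, hu, h⟩
    · exact ⟨u⁻¹, inv_mem hu, h⟩
  induction hm using Subgroup.closure_induction with
  | mem u hu =>
    refine aux u (Subgroup.subset_closure hu) ?_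
    rcases hu with rfl | rfl | rfl <;> assumption
  | one => exact ⟨1, one_mem _, by simp⟩
  | mul u v _ _ hu hv =>
    obtain ⟨p, hp, ep⟩ := hu
    obtain ⟨q, hq, eq⟩ := hv
    exact ⟨p * q, mul_mem hp hq, by rw [← mul_assoc, ep, mul_assoc, eq, mul_assoc]⟩
  | inv u _ hu =>
    obtain ⟨p, hp, ep⟩ := hu
    refine ⟨p⁻¹, inv_mem hp, ?_⟩
    rw [eq_inv_mul_iff_mul_eq, ← mul_assoc, ← ep]; group

theorem hw_cos {x y : G} (h1 : SemiconjBy x (y ^ 2) (y ^ 2)⁻¹)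
    (h2 : SemiconjBy y (x ^ 2) (x ^ 2)⁻¹)
    (hxy : Subgroup.closure ({x, y} : Set G) = ⊤) (g : G) : HwCos x y g := by
  obtain ⟨cAB, cAC, cBC, px, py, pz⟩ := hw_basic h1 h2
  have mA : x ^ 2 ∈ hwM x y := Subgroup.subset_closure (by simp)
  have mB : y ^ 2 ∈ hwM x y := Subgroup.subset_closure (by simp)
  have mC : (x * y) ^ 2 ∈ hwM x y := Subgroup.subset_closure (by simp)
  have nx : ∀ m ∈ hwM x y, ∃ n ∈ hwM x y, x * m = n * x := fun m hm =>
    hw_conj_mem (Or.inl px.2.1) (Or.inr px.2.2.1) (Or.inr px.2.2.2) hm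
  have ny : ∀ m ∈ hwM x y, ∃ n ∈ hwM x y, y * m = n * y := fun m hm =>
    hw_conj_mem (Or.inr py.2.2.1) (Or.inl py.2.1) (Or.inr py.2.2.2) hm
  have nM : ∀ n ∈ hwM x y, ∀ g, HwCos x y g → HwCos x y (n * g) := by
    rintro n hn g ⟨m, hm, h⟩
    refine ⟨n * m, mul_mem hn hm, ?_⟩
    rcases h with rfl | rfl | rfl | rfl <;> simp [mul_assoc]
  have lx : ∀ g, HwCos x y g → HwCos x y (x * g) := by
    rintro g ⟨m, hm, h⟩
    obtain ⟨n, hn, e⟩ := nx m hm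
    rcases h with rfl | rfl | rfl | rfl
    · exact ⟨n, hn, Or.inr (Or.inl e)⟩
    · exact ⟨n * x ^ 2, mul_mem hn mA, Or.inl (by rw [← mul_assoc, e, pow_two, mul_assoc])⟩
    · exact ⟨n, hn, Or.inr (Or.inr (Or.inr (by rw [← mul_assoc, e, mul_assoc])))⟩
    · exact ⟨n * x ^ 2, mul_mem hn mA, Or.inr (Or.inr (Or.inl (by
        rw [← mul_assoc, e, pow_two]; simp only [mul_assoc])))⟩
  have lx' : ∀ g, HwCos x y g → HwCos x y (x⁻¹ * g) := by
    intro g h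
    have := nM _ (inv_mem mA) _ (lx g h)
    have e : (x ^ 2)⁻¹ * (x * g) = x⁻¹ * g := by group
    rwa [e] at this
  -- left multiplication by `x * y` squares into the lattice
  have nz : ∀ m ∈ hwM x y, ∃ n ∈ hwM x y, (x * y) * m = n * (x * y) := fun m hm =>
    hw_conj_mem (Or.inr pz.2.2.1) (Or.inr pz.2.2.2) (Or.inl pz.2.1) hm
  have lz : ∀ g, HwCos x y g → HwCos x y ((x * y) * g) := by
    rintro g ⟨m, hm, h⟩
    obtain ⟨n, hn, e⟩ := nz m hm
    obtain ⟨k, hk, ek⟩ := nx (y ^ 2) mB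
    rcases h with rfl | rfl | rfl | rfl
    · exact ⟨n, hn, Or.inr (Or.inr (Or.inr e))⟩
    · -- `x y x = C y⁻¹ = C B⁻¹ y`
      refine ⟨n * ((x * y) ^ 2 * (y ^ 2)⁻¹), mul_mem hn (mul_mem mC (inv_mem mB)),
        Or.inr (Or.inr (Or.inl ?_))⟩
      rw [← mul_assoc, e]; simp only [pow_two, mul_inv_rev, mul_assoc]; group
    · refine ⟨n * k, mul_mem hn hk, Or.inr (Or.inl ?_)⟩
      rw [← mul_assoc, e, mul_assoc n k, ← ek]; simp only [pow_two, mul_assoc]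
    · refine ⟨n * (x * y) ^ 2, mul_mem hn mC, Or.inl ?_⟩
      rw [← mul_assoc, e, pow_two]; simp only [mul_assoc]
  have ly : ∀ g, HwCos x y g → HwCos x y (y * g) := by
    intro g h
    have := lx' _ (lz g h)
    have e : x⁻¹ * ((x * y) * g) = y * g := by group
    rwa [e] at this
  have ly' : ∀ g, HwCos x y g → HwCos x y (y⁻¹ * g) := by
    intro g h
    have := nM _ (inv_mem mB) _ (ly g h)
    have e : (y ^ 2)⁻¹ * (y * g) = y⁻¹ * g := by group
    rwa [e] at this
  have hg : g ∈ Subgroup.closure ({x, y} : Set G) := by rw [hxy]; trivial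
  induction hg using Subgroup.closure_induction_left with
  | one => exact ⟨1, one_mem _, Or.inl rfl⟩
  | mul_left u hu v _ hv =>
    rcases hu with rfl | rfl
    · exact lx _ hv
    · exact ly _ hv
  | inv_mul_cancel u hu v _ hv =>
    rcases hu with rfl | rfl
    · exact lx' _ hv
    · exact ly' _ hv

theorem hw_pair {x y : G} (h1 : SemiconjBy x (y ^ 2) (y ^ 2)⁻¹)
    (h2 : SemiconjBy y (x ^ 2) (x ^ 2)⁻¹)
    (hxy : Subgroup.closure ({x, y} : Set G) = ⊤)
    (X Y Z : G →* Multiplicative (ZMod 2))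
    (Xx : X x = 1) (Xy : X y ≠ 1) (Yx : Y x ≠ 1) (Yy : Y y = 1)
    (Zx : Z x ≠ 1) (Zz : Z (x * y) = 1)
    (s t : G) (hst : Subgroup.closure ({s, t} : Set G) = ⊤) : HwR s t := by
  obtain ⟨cAB, cAC, cBC, px, py, pz⟩ := hw_basic h1 h2
  have hM : ∀ χ : G →* Multiplicative (ZMod 2), ∀ m ∈ hwM x y, χ m = 1 := by
    intro χ m hm
    have : hwM x y ≤ χ.ker := by
      have sq : ∀ u : Multiplicative (ZMod 2), u ^ 2 = 1 := by decide
      refine (Subgroup.closure_le _).2 ?_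
      rintro u (rfl | rfl | rfl) <;> simp only [SetLike.mem_coe, MonoidHom.mem_ker, map_pow, sq]
    exact this hm
  have no : ∀ χ : G →* Multiplicative (ZMod 2), ∀ u, χ u ≠ 1 → ¬ (χ s = 1 ∧ χ t = 1) := by
    rintro χ u hu ⟨hs, ht⟩
    have : Subgroup.closure ({s, t} : Set G) ≤ χ.ker := by
      refine (Subgroup.closure_le _).2 ?_
      rintro v (rfl | rfl) <;> assumption
    rw [hst] at this
    exact hu (this (Subgroup.mem_top u))
  have nX := no X y Xy
  have nY := no Y x Yx
  have nZ := no Z x Zx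
  have cls : ∀ g, (X g = 1 ∧ Y g = 1 ∧ Z g = 1) ∨
      (X g = 1 ∧ HwP (x ^ 2) (y ^ 2) ((x * y) ^ 2) g) ∨
      (Y g = 1 ∧ HwP (y ^ 2) (x ^ 2) ((x * y) ^ 2) g) ∨
      (Z g = 1 ∧ HwP ((x * y) ^ 2) (x ^ 2) (y ^ 2) g) := by
    intro g
    obtain ⟨m, hm, h⟩ := hw_cos h1 h2 hxy g
    rcases h with rfl | rfl | rfl | rfl
    · exact Or.inl ⟨hM _ _ hm, hM _ _ hm, hM _ _ hm⟩
    · refine Or.inr (Or.inl ⟨by rw [map_mul, hM _ _ hm, Xx, one_mul], ?_⟩)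
      exact (HwP.mulM cAB cAC cBC hm x).1 px
    · refine Or.inr (Or.inr (Or.inl ⟨by rw [map_mul, hM _ _ hm, Yy, one_mul], ?_⟩))
      refine (HwP.mulM cAB.symm cBC cAC ?_ y).1 py
      rwa [Set.insert_comm]
    · refine Or.inr (Or.inr (Or.inr ⟨by rw [map_mul, hM _ _ hm, Zz, one_mul], ?_⟩))
      refine (HwP.mulM cAC.symm cBC.symm cAB ?_ _).1 pz
      rwa [Set.insert_comm, Set.pair_comm ((x * y) ^ 2)]
  rcases cls s with ⟨a1, a2, a3⟩ | ⟨a, p⟩ | ⟨a, p⟩ | ⟨a, p⟩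
  · rcases cls t with ⟨b1, b2, b3⟩ | ⟨b, q⟩ | ⟨b, q⟩ | ⟨b, q⟩
    · exact absurd ⟨a1, b1⟩ nX
    · exact absurd ⟨a1, b⟩ nX
    · exact absurd ⟨a2, b⟩ nY
    · exact absurd ⟨a3, b⟩ nZ
  · rcases cls t with ⟨b1, b2, b3⟩ | ⟨b, q⟩ | ⟨b, q⟩ | ⟨b, q⟩
    · exact absurd ⟨a, b1⟩ nX
    · exact absurd ⟨a, b⟩ nX
    · exact HwR.of cAB p q
    · exact HwR.of cAC p.swap q
  · rcases cls t with ⟨b1, b2, b3⟩ | ⟨b, q⟩ | ⟨b, q⟩ | ⟨b, q⟩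
    · exact absurd ⟨a, b2⟩ nY
    · exact (HwR.of cAB q p).symm
    · exact absurd ⟨a, b⟩ nY
    · exact HwR.of cBC p.swap q.swap
  · rcases cls t with ⟨b1, b2, b3⟩ | ⟨b, q⟩ | ⟨b, q⟩ | ⟨b, q⟩
    · exact absurd ⟨a, b3⟩ nZ
    · exact (HwR.of cAC q.swap p).symm
    · exact (HwR.of cBC q.swap p.swap).symm
    · exact absurd ⟨a, b⟩ nZ

end HwAux

/-- Characters of the Hantzsche–Wendt group. -/
def hwChar (u v : Multiplicative (ZMod 2)) : HantzscheWendtGroup →* Multiplicative (ZMod 2) :=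
  PresentedGroup.toGroup (f := ![u, v]) (by
    rintro r (rfl | rfl)
    · simp only [map_mul, map_inv, map_pow, FreeGroup.lift_apply_of, Matrix.cons_val_zero,
        Matrix.cons_val_one]
      revert u v; decide
    · simp only [map_mul, map_inv, map_pow, FreeGroup.lift_apply_of, Matrix.cons_val_zero,
        Matrix.cons_val_one]
      revert u v; decide)

theorem hwChar_x (u v : Multiplicative (ZMod 2)) : hwChar u v hwX = u :=
  PresentedGroup.toGroup.of _

theorem hwChar_y (u v : Multiplicative (ZMod 2)) : hwChar u v hwY = v :=
  PresentedGroup.toGroup.of _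

theorem hw_rel1 : SemiconjBy hwX (hwY ^ 2) (hwY ^ 2)⁻¹ := by
  have h : hwX⁻¹ * hwY ^ 2 * hwX * hwY ^ 2 = 1 :=
    PresentedGroup.one_of_mem (rels := hwRels) (Or.inl rfl)
  have h' : hwY ^ 2 * (hwX * hwY ^ 2) = hwX := by
    simpa [mul_assoc, inv_mul_eq_one, eq_comm] using h
  rw [SemiconjBy, eq_inv_mul_iff_mul_eq, h']

theorem hw_rel2 : SemiconjBy hwY (hwX ^ 2) (hwX ^ 2)⁻¹ := by
  have h : hwY⁻¹ * hwX ^ 2 * hwY * hwX ^ 2 = 1 :=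
    PresentedGroup.one_of_mem (rels := hwRels) (Or.inr rfl)
  have h' : hwX ^ 2 * (hwY * hwX ^ 2) = hwY := by
    simpa [mul_assoc, inv_mul_eq_one, eq_comm] using h
  rw [SemiconjBy, eq_inv_mul_iff_mul_eq, h']

theorem hw_gen : Subgroup.closure ({hwX, hwY} : Set HantzscheWendtGroup) = ⊤ := by
  rw [← PresentedGroup.closure_range_of hwRels]
  congr 1
  ext g
  simp only [Set.mem_insert_iff, Set.mem_singleton_iff, Set.mem_range, Fin.exists_fin_two]
  simp only [hwX, hwY, eq_comm]

theorem hw_main (s t : HantzscheWendtGroup)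
    (hst : Subgroup.closure ({s, t} : Set HantzscheWendtGroup) = ⊤) : HwR s t := by
  have ne : Multiplicative.ofAdd (1 : ZMod 2) ≠ 1 := by decide
  have sq : Multiplicative.ofAdd (1 : ZMod 2) * Multiplicative.ofAdd (1 : ZMod 2) = 1 := by decide
  refine hw_pair hw_rel1 hw_rel2 hw_gen (hwChar 1 (Multiplicative.ofAdd 1))
    (hwChar (Multiplicative.ofAdd 1) 1) (hwChar (Multiplicative.ofAdd 1) (Multiplicative.ofAdd 1))
    ?_ ?_ ?_ ?_ ?_ ?_ s t hst <;> simp only [map_mul, hwChar_x, hwChar_y] <;>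
    first | exact ne | exact sq | rfl

/-- For any generating pair `α, β` of the Hantzsche–Wendt group, setting `γ = αβ`,
`a = α²`, `b = β²`, `c = γ²`, the elements `a, b, c` pairwise commute and are inverted
by conjugation by the remaining two of `α, β, γ`. -/
theorem hw_generators_relations (α β : HantzscheWendtGroup)
    (hgen : Subgroup.closure ({α, β} : Set HantzscheWendtGroup) = ⊤)
    (γ a b c : HantzscheWendtGroup)
    (hγ : γ = α * β) (ha : a = α ^ 2) (hb : b = β ^ 2) (hc : c = γ ^ 2) :
    (a * b = b * a ∧ a * c = c * a ∧ b * c = c * b) ∧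
    β⁻¹ * a * β = a⁻¹ ∧ γ⁻¹ * a * γ = a⁻¹ ∧
    α⁻¹ * b * α = b⁻¹ ∧ γ⁻¹ * b * γ = b⁻¹ ∧
    α⁻¹ * c * α = c⁻¹ ∧ β⁻¹ * c * β = c⁻¹ := by
  subst hγ ha hb hc
  have g1 : Subgroup.closure ({α, α * β} : Set HantzscheWendtGroup) = ⊤ := by
    rw [eq_top_iff, ← hgen, Subgroup.closure_le]
    have m1 : α ∈ Subgroup.closure ({α, α * β} : Set HantzscheWendtGroup) :=
      Subgroup.subset_closure (by simp)
    have m2 : α * β ∈ Subgroup.closure ({α, α * β} : Set HantzscheWendtGroup) :=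
      Subgroup.subset_closure (by simp)
    rintro v (rfl | rfl)
    · exact m1
    · exact (Subgroup.mul_mem_cancel_left _ m1).1 m2
  have g2 : Subgroup.closure ({β, α * β} : Set HantzscheWendtGroup) = ⊤ := by
    rw [eq_top_iff, ← hgen, Subgroup.closure_le]
    have m1 : β ∈ Subgroup.closure ({β, α * β} : Set HantzscheWendtGroup) :=
      Subgroup.subset_closure (by simp)
    have m2 : α * β ∈ Subgroup.closure ({β, α * β} : Set HantzscheWendtGroup) :=
      Subgroup.subset_closure (by simp)
    rintro v (rfl | rfl)
    · exact (Subgroup.mul_mem_cancel_right _ m1).1 m2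
    · exact m1
  obtain ⟨c1, a1, b1⟩ := hw_main _ _ hgen
  obtain ⟨c2, a2, b2⟩ := hw_main _ _ g1
  obtain ⟨c3, a3, b3⟩ := hw_main _ _ g2
  exact ⟨⟨c1, c2, c3⟩, a1, a2, b1, a3, b2, b3⟩
end

section
/- In the Hantzsche–Wendt group Δ_P with generators x, y as in its presentation, the subgroup generated by x², y², and (xy)² is a normal subgroup which is free abelian of rank 3, and the quotient of Δ_P by this subgroup is isomorphic to the Klein four-group C₂ × C₂. -/
theorem hw_rel1_s2 : hwX⁻¹ * hwY ^ 2 * hwX * hwY ^ 2 = 1 := by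
  have h := PresentedGroup.one_of_mem (rels := hwRels) (Or.inl rfl)
  simpa [hwX, hwY, PresentedGroup.of] using h

theorem hw_rel2_s2 : hwY⁻¹ * hwX ^ 2 * hwY * hwX ^ 2 = 1 := by
  have h := PresentedGroup.one_of_mem (rels := hwRels) (Or.inr rfl)
  simpa [hwX, hwY, PresentedGroup.of] using h

theorem hw_bx : hwY ^ 2 * hwX = hwX * (hwY ^ 2)⁻¹ := by
  have h := hw_rel1_s2
  rw [eq_mul_inv_iff_mul_eq]
  calc _ = hwX * (hwX⁻¹ * hwY ^ 2 * hwX * hwY ^ 2) := by group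
    _ = _ := by rw [h, mul_one]

theorem hw_ay : hwX ^ 2 * hwY = hwY * (hwX ^ 2)⁻¹ := by
  have h := hw_rel2_s2
  rw [eq_mul_inv_iff_mul_eq]
  calc _ = hwY * (hwY⁻¹ * hwX ^ 2 * hwY * hwX ^ 2) := by group
    _ = _ := by rw [h, mul_one]

/-- Relations of the form `b x = x b⁻¹` imply that `b` commutes with `x²`. -/
theorem hw_comm_sq {G : Type*} [Group G] {b x : G} (h : b * x = x * b⁻¹) :
    Commute (x ^ 2) b := by
  have h1 : SemiconjBy x b⁻¹ b := h.symm
  have h2 : SemiconjBy x b b⁻¹ := by simpa using h1.inv_right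
  have := h1.mul_left h2
  have h3 : SemiconjBy (x * x) b b := h1.mul_left h2
  rw [pow_two]; exact h3

theorem hw_ab : Commute (hwX ^ 2) (hwY ^ 2) := hw_comm_sq hw_bx

theorem hw_xcxc : hwX * (hwX * hwY) ^ 2 * hwX⁻¹ * (hwX * hwY) ^ 2 = 1 := by
  have e : (hwX ^ 2)⁻¹ * hwY = hwY * hwX ^ 2 := by
    have h1 : SemiconjBy hwY (hwX ^ 2)⁻¹ (hwX ^ 2) := hw_ay.symm
    have := h1.inv_right
    rw [inv_inv] at this
    exact this.symm
  calc _ = hwX ^ 2 * hwY * (hwX * hwY ^ 2) * hwX * hwY := by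
        simp only [pow_two]; group
    _ = hwX ^ 2 * hwY * ((hwY ^ 2)⁻¹ * hwX) * hwX * hwY := by
        have h1 : SemiconjBy hwX (hwY ^ 2)⁻¹ (hwY ^ 2) := hw_bx.symm
        have h2 := h1.inv_right
        rw [inv_inv] at h2
        rw [h2.eq]
    _ = hwX ^ 2 * hwY⁻¹ * (hwX ^ 2 * hwY) := by simp only [pow_two]; group
    _ = 1 := by rw [hw_ay]; group

theorem hw_cx : (hwX * hwY) ^ 2 * hwX = hwX * ((hwX * hwY) ^ 2)⁻¹ := by
  have h := hw_xcxc
  have h1 : hwX * (hwX * hwY) ^ 2 = ((hwX * hwY) ^ 2)⁻¹ * hwX := by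
    rw [eq_inv_mul_iff_mul_eq, ← mul_inv_eq_one, ← mul_assoc]
    have h2 := mul_eq_one_iff_eq_inv.mp h
    calc _ = (hwX * hwY) ^ 2 * (hwX * (hwX * hwY) ^ 2 * hwX⁻¹) := by group
      _ = 1 := by rw [h2]; group
  have h3 : SemiconjBy hwX ((hwX * hwY) ^ 2) ((hwX * hwY) ^ 2)⁻¹ := h1
  have h4 := h3.inv_right
  rw [inv_inv] at h4
  exact h4.symm

theorem hw_cy : (hwX * hwY) ^ 2 * hwY = hwY * ((hwX * hwY) ^ 2)⁻¹ := by
  have hx : SemiconjBy hwX ((hwX * hwY) ^ 2)⁻¹ ((hwX * hwY) ^ 2) := hw_cx.symm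
  have hxi : SemiconjBy hwX⁻¹ ((hwX * hwY) ^ 2) ((hwX * hwY) ^ 2)⁻¹ :=
    SemiconjBy.inv_symm_left_iff.mpr hx
  have hc : SemiconjBy (hwX * hwY) ((hwX * hwY) ^ 2) ((hwX * hwY) ^ 2) :=
    (Commute.refl _).pow_right 2
  have h := hxi.mul_left hc
  rw [inv_mul_cancel_left] at h
  have h4 := h.inv_right
  rw [inv_inv] at h4
  exact h4.symm

theorem hw_ac : Commute (hwX ^ 2) ((hwX * hwY) ^ 2) := hw_comm_sq hw_cx

theorem hw_bc : Commute (hwY ^ 2) ((hwX * hwY) ^ 2) := hw_comm_sq hw_cy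

/-- The action of `x` on `ℤ³`. -/
def hwPX : Equiv.Perm (ℤ × ℤ × ℤ) where
  toFun v := (v.1 + 1, -v.2.1, 1 - v.2.2)
  invFun v := (v.1 - 1, -v.2.1, 1 - v.2.2)
  left_inv v := by simp
  right_inv v := by simp

/-- The action of `y` on `ℤ³`. -/
def hwPY : Equiv.Perm (ℤ × ℤ × ℤ) where
  toFun v := (-v.1, v.2.1 + 1, -v.2.2)
  invFun v := (-v.1, v.2.1 - 1, -v.2.2)
  left_inv v := by simp
  right_inv v := by simp

/-- Translations of `ℤ³`. -/
def hwT (t : ℤ × ℤ × ℤ) : Equiv.Perm (ℤ × ℤ × ℤ) := Equiv.addRight t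

theorem hwT_zpow (t : ℤ × ℤ × ℤ) (n : ℤ) : hwT t ^ n = hwT (n • t) := by
  let F : Multiplicative (ℤ × ℤ × ℤ) →* Equiv.Perm (ℤ × ℤ × ℤ) :=
    { toFun := fun s => hwT s.toAdd
      map_one' := by ext v <;> simp [hwT]
      map_mul' := fun s u => by ext v <;> simp [hwT] <;> ring }
  exact (map_zpow F (Multiplicative.ofAdd t) n).symm

theorem hwPX_sq : hwPX ^ 2 = hwT (2, 0, 0) := by
  ext v <;> simp [hwPX, hwT, pow_two] ; ring

theorem hwPY_sq : hwPY ^ 2 = hwT (0, 2, 0) := by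
  ext v <;> simp [hwPY, hwT, pow_two] ; ring

theorem hwPXY_sq : (hwPX * hwPY) ^ 2 = hwT (0, 0, 2) := by
  ext v <;> simp [hwPX, hwPY, hwT, pow_two] ; ring

/-- The affine representation. -/
def hwRep : HantzscheWendtGroup →* Equiv.Perm (ℤ × ℤ × ℤ) :=
  PresentedGroup.toGroup (f := ![hwPX, hwPY]) (by
    rintro r (rfl | rfl)
    · simp only [map_mul, map_inv, map_pow, FreeGroup.lift_apply_of, Matrix.cons_val_zero,
        Matrix.cons_val_one, hwPY_sq]
      rw [mul_assoc, mul_assoc, inv_mul_eq_one]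
      ext v <;> simp [hwPX, hwT]
    · simp only [map_mul, map_inv, map_pow, FreeGroup.lift_apply_of, Matrix.cons_val_zero,
        Matrix.cons_val_one, hwPX_sq]
      rw [mul_assoc, mul_assoc, inv_mul_eq_one]
      ext v <;> simp [hwPY, hwT])

theorem hwRep_X : hwRep hwX = hwPX := by simp [hwRep, hwX]
theorem hwRep_Y : hwRep hwY = hwPY := by simp [hwRep, hwY]

/-- The quotient map to the Klein four-group. -/
def hwQ : HantzscheWendtGroup →* Multiplicative (ZMod 2 × ZMod 2) :=
  PresentedGroup.toGroup
    (f := ![Multiplicative.ofAdd (1, 0), Multiplicative.ofAdd (0, 1)]) (by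
    rintro r (rfl | rfl)
    · simp only [map_mul, map_inv, map_pow, FreeGroup.lift_apply_of, Matrix.cons_val_zero,
        Matrix.cons_val_one]
      decide
    · simp only [map_mul, map_inv, map_pow, FreeGroup.lift_apply_of, Matrix.cons_val_zero,
        Matrix.cons_val_one]
      decide)

theorem hwQ_X : hwQ hwX = Multiplicative.ofAdd (1, 0) := by simp [hwQ, hwX]
theorem hwQ_Y : hwQ hwY = Multiplicative.ofAdd (0, 1) := by simp [hwQ, hwY]

/-- The parametrisation of the translation subgroup. -/
def hwL : Multiplicative (Fin 3 → ℤ) →* HantzscheWendtGroup where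
  toFun v := (hwX ^ 2) ^ (v.toAdd 0) * (hwY ^ 2) ^ (v.toAdd 1) * ((hwX * hwY) ^ 2) ^ (v.toAdd 2)
  map_one' := by simp
  map_mul' u v := by
    have h1 := hw_ab
    have h2 := hw_ac
    have h3 := hw_bc
    generalize hwX ^ 2 = a at *
    generalize hwY ^ 2 = b at *
    generalize (hwX * hwY) ^ 2 = c at *
    simp only [toAdd_mul, Pi.add_apply, zpow_add]
    generalize u.toAdd 0 = i
    generalize u.toAdd 1 = j
    generalize u.toAdd 2 = k
    generalize v.toAdd 0 = l
    generalize v.toAdd 1 = m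
    generalize v.toAdd 2 = n
    have e1 : a ^ l * b ^ j = b ^ j * a ^ l := (h1.zpow_zpow l j).eq
    have e2 : a ^ l * c ^ k = c ^ k * a ^ l := (h2.zpow_zpow l k).eq
    have e3 : b ^ m * c ^ k = c ^ k * b ^ m := (h3.zpow_zpow m k).eq
    calc _ = a ^ i * (a ^ l * b ^ j) * (b ^ m * c ^ k) * c ^ n := by simp only [mul_assoc]
      _ = a ^ i * b ^ j * (a ^ l * c ^ k) * b ^ m * c ^ n := by
        rw [e1, e3]; simp only [mul_assoc]
      _ = _ := by rw [e2]; simp only [mul_assoc]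

theorem hwL_apply (v : Multiplicative (Fin 3 → ℤ)) : hwL v =
    (hwX ^ 2) ^ (v.toAdd 0) * (hwY ^ 2) ^ (v.toAdd 1) * ((hwX * hwY) ^ 2) ^ (v.toAdd 2) := rfl

theorem hwL_inj : Function.Injective hwL := by
  rw [injective_iff_map_eq_one]
  intro v hv
  have h := congrArg (fun g => hwRep g (0, 0, 0)) hv
  simp only [hwL_apply, map_mul, map_zpow, map_pow, hwRep_X, hwRep_Y, hwPX_sq, hwPY_sq,
    hwPXY_sq, hwT_zpow, map_one] at h
  simp [hwT] at h
  apply Multiplicative.toAdd.injective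
  funext i
  fin_cases i
  · simpa using h.1
  · simpa using h.2.1
  · simpa using h.2.2

theorem hwL_range :
    hwL.range = Subgroup.closure {hwX ^ 2, hwY ^ 2, (hwX * hwY) ^ 2} := by
  apply le_antisymm
  · rintro _ ⟨v, rfl⟩
    rw [hwL_apply]
    refine mul_mem (mul_mem ?_ ?_) ?_ <;>
      exact Subgroup.zpow_mem _ (Subgroup.subset_closure (by simp)) _
  · rw [Subgroup.closure_le]
    rintro _ (rfl | rfl | rfl)
    · exact ⟨Multiplicative.ofAdd ![1, 0, 0], by simp [hwL_apply]⟩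
    · exact ⟨Multiplicative.ofAdd ![0, 1, 0], by simp [hwL_apply]⟩
    · exact ⟨Multiplicative.ofAdd ![0, 0, 1], by simp [hwL_apply]⟩

theorem hw_closure : Subgroup.closure {hwX, hwY} = ⊤ := by
  rw [← PresentedGroup.closure_range_of hwRels]
  congr 1
  ext g
  simp only [Set.mem_insert_iff, Set.mem_singleton_iff, Set.mem_range, Fin.exists_fin_two]
  simp only [hwX, hwY, eq_comm]

theorem hw_normal (N : Subgroup HantzscheWendtGroup)
    (hN : N = Subgroup.closure {hwX ^ 2, hwY ^ 2, (hwX * hwY) ^ 2}) : N.Normal := by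
  have ha : hwX ^ 2 ∈ N := hN ▸ Subgroup.subset_closure (by simp)
  have hb : hwY ^ 2 ∈ N := hN ▸ Subgroup.subset_closure (by simp)
  have hc : (hwX * hwY) ^ 2 ∈ N := hN ▸ Subgroup.subset_closure (by simp)
  -- conjugation by the inverses of the generators maps `N` into `N`
  have key : ∀ g : HantzscheWendtGroup, g⁻¹ * hwX ^ 2 * g ∈ N → g⁻¹ * hwY ^ 2 * g ∈ N →
      g⁻¹ * (hwX * hwY) ^ 2 * g ∈ N → ∀ n ∈ N, g⁻¹ * n * g ∈ N := by
    intro g h1 h2 h3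
    have : N ≤ N.comap (MulAut.conj g⁻¹).toMonoidHom := by
      conv_lhs => rw [hN]
      rw [Subgroup.closure_le]
      rintro _ (rfl | rfl | rfl) <;> simpa
    intro n hn
    simpa using this hn
  have inv : ∀ {g t : HantzscheWendtGroup}, t * g = g * t⁻¹ → t ∈ N → g⁻¹ * t * g ∈ N := by
    intro g t h ht
    rw [mul_assoc, h, inv_mul_cancel_left]
    exact inv_mem ht
  have kx := key hwX (by simpa [pow_two] using ha) (inv hw_bx hb) (inv hw_cx hc)
  have ky := key hwY (inv hw_ay ha) (by simpa [pow_two] using hb) (inv hw_cy hc)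
  have conjinv : ∀ g : HantzscheWendtGroup, g ^ 2 ∈ N → (∀ n ∈ N, g⁻¹ * n * g ∈ N) →
      ∀ n ∈ N, g * n * g⁻¹ ∈ N := by
    intro g hg h n hn
    have h1 := mul_mem (mul_mem hg (h n hn)) (inv_mem hg)
    have : g ^ 2 * (g⁻¹ * n * g) * (g ^ 2)⁻¹ = g * n * g⁻¹ := by group
    rwa [this] at h1
  have kx' := conjinv _ ha kx
  have ky' := conjinv _ hb ky
  rw [← Subgroup.normalizer_eq_top_iff, eq_top_iff, ← hw_closure, Subgroup.closure_le]
  have fin : ∀ g : HantzscheWendtGroup, (∀ n ∈ N, g⁻¹ * n * g ∈ N) →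
      (∀ n ∈ N, g * n * g⁻¹ ∈ N) → ∀ h, h ∈ N ↔ g * h * g⁻¹ ∈ N := by
    intro g h1 h2 h
    refine ⟨h2 h, fun hh => ?_⟩
    have := h1 _ hh
    have e : g⁻¹ * (g * h * g⁻¹) * g = h := by group
    rwa [e] at this
  rintro _ (rfl | rfl)
  · exact Subgroup.mem_normalizer_iff.mpr (fin _ kx kx')
  · exact Subgroup.mem_normalizer_iff.mpr (fin _ ky ky')

theorem hw_ker (N : Subgroup HantzscheWendtGroup)
    (hN : N = Subgroup.closure {hwX ^ 2, hwY ^ 2, (hwX * hwY) ^ 2}) : N = hwQ.ker := by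
  have := hw_normal N hN
  have ha : hwX ^ 2 ∈ N := hN ▸ Subgroup.subset_closure (by simp)
  have hb : hwY ^ 2 ∈ N := hN ▸ Subgroup.subset_closure (by simp)
  have hc : (hwX * hwY) ^ 2 ∈ N := hN ▸ Subgroup.subset_closure (by simp)
  apply le_antisymm
  · conv_lhs => rw [hN]
    rw [Subgroup.closure_le]
    rintro _ (rfl | rfl | rfl) <;>
      simp only [SetLike.mem_coe, MonoidHom.mem_ker, map_pow, map_mul, hwQ_X, hwQ_Y] <;> decide
  · let π := QuotientGroup.mk' N
    have pk : ∀ g, π g = 1 ↔ g ∈ N := fun g => QuotientGroup.eq_one_iff g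
    have hX : π hwX ^ 2 = 1 := by rw [← map_pow]; exact (pk _).2 ha
    have hY : π hwY ^ 2 = 1 := by rw [← map_pow]; exact (pk _).2 hb
    have hXY : (π hwX * π hwY) ^ 2 = 1 := by rw [← map_mul, ← map_pow]; exact (pk _).2 hc
    have comm : Commute (π hwX) (π hwY) := by
      have i1 : (π hwX)⁻¹ = π hwX := inv_eq_of_mul_eq_one_left (by rw [← pow_two, hX])
      have i2 : (π hwY)⁻¹ = π hwY := inv_eq_of_mul_eq_one_left (by rw [← pow_two, hY])
      have i3 : (π hwX * π hwY)⁻¹ = π hwX * π hwY :=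
        inv_eq_of_mul_eq_one_left (by rw [← pow_two, hXY])
      rw [mul_inv_rev, i1, i2] at i3
      exact i3.symm
    have all : ∀ g, ∃ i j : ℤ, π g = π (hwX ^ i * hwY ^ j) := by
      intro g
      have hg : g ∈ Subgroup.closure {hwX, hwY} := by rw [hw_closure]; trivial
      induction hg using Subgroup.closure_induction with
      | mem g hg =>
        rcases hg with rfl | rfl
        · exact ⟨1, 0, by simp⟩
        · exact ⟨0, 1, by simp⟩
      | one => exact ⟨0, 0, by simp⟩
      | mul g h _ _ ig ih =>
        obtain ⟨i, j, e⟩ := ig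
        obtain ⟨k, l, f⟩ := ih
        refine ⟨i + k, j + l, ?_⟩
        simp only [map_mul, map_zpow] at e f ⊢
        rw [e, f, zpow_add, zpow_add]
        have := (comm.zpow_zpow k j).eq
        simp only [mul_assoc]
        rw [← mul_assoc (π hwY ^ j), ← this, mul_assoc]
      | inv g _ ig =>
        obtain ⟨i, j, e⟩ := ig
        refine ⟨-i, -j, ?_⟩
        simp only [map_mul, map_zpow, map_inv] at e ⊢
        rw [e, mul_inv_rev, ← zpow_neg, ← zpow_neg]
        exact ((comm.zpow_zpow (-i) (-j)).eq).symm
    intro g hg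
    obtain ⟨i, j, e⟩ := all g
    have hle : N ≤ hwQ.ker := by
      conv_lhs => rw [hN]
      rw [Subgroup.closure_le]
      rintro _ (rfl | rfl | rfl) <;>
        simp only [SetLike.mem_coe, MonoidHom.mem_ker, map_pow, map_mul, hwQ_X, hwQ_Y] <;> decide
    have hmem : g⁻¹ * (hwX ^ i * hwY ^ j) ∈ N := by
      rw [← pk, map_mul, map_inv, e, inv_mul_cancel]
    have hq := hle hmem
    rw [MonoidHom.mem_ker] at hq hg
    rw [map_mul, map_inv, hg, inv_one, one_mul, map_mul, map_zpow, map_zpow, hwQ_X, hwQ_Y,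
      ← ofAdd_zsmul, ← ofAdd_zsmul, ← ofAdd_add, ofAdd_eq_one] at hq
    simp [ZMod.intCast_zmod_eq_zero_iff_dvd, Prod.ext_iff] at hq
    obtain ⟨⟨k, rfl⟩, ⟨l, rfl⟩⟩ := hq
    rw [← pk, e, map_mul, map_zpow, map_zpow, zpow_mul, zpow_mul]
    norm_cast
    simp [hX, hY]

/-- In the Hantzsche–Wendt group, the subgroup generated by `x²`, `y²` and `(xy)²` is
normal, free abelian of rank 3, and the quotient by it is the Klein four-group. -/
theorem hw_translation_subgroup (N : Subgroup HantzscheWendtGroup)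
    (hN : N = Subgroup.closure {hwX ^ 2, hwY ^ 2, (hwX * hwY) ^ 2}) :
    ∃ hnormal : N.Normal,
      Nonempty (N ≃* Multiplicative (Fin 3 → ℤ)) ∧
      Nonempty ((HantzscheWendtGroup ⧸ N) ≃* Multiplicative (ZMod 2 × ZMod 2)) := by
  have hn := hw_normal N hN
  refine ⟨hn, ⟨?_⟩, ⟨?_⟩⟩
  · exact (MulEquiv.subgroupCongr (hN.trans hwL_range.symm)).trans
      (MonoidHom.ofInjective hwL_inj).symm
  · refine (QuotientGroup.quotientMulEquivOfEq (hw_ker N hN)).trans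
      (QuotientGroup.quotientKerEquivOfSurjective hwQ ?_)
    have : ∀ z : Multiplicative (ZMod 2 × ZMod 2), z = 1 ∨ z = Multiplicative.ofAdd (1, 0) ∨
        z = Multiplicative.ofAdd (0, 1) ∨
        z = Multiplicative.ofAdd (1, 0) * Multiplicative.ofAdd (0, 1) := by decide
    intro z
    rcases this z with h | h | h | h
    · exact ⟨1, by simp [h]⟩
    · exact ⟨hwX, by rw [hwQ_X, h]⟩
    · exact ⟨hwY, by rw [hwQ_Y, h]⟩
    · exact ⟨hwX * hwY, by rw [map_mul, hwQ_X, hwQ_Y, h]⟩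
end

section
/- For every natural number k, the free abelian group ℤᵏ is diffuse. -/
/-- A group `G` is diffuse if every finite nonempty subset `A` of `G` has an extremal point,
i.e. an element `a ∈ A` such that for every `g ≠ 1`, either `g*a ∉ A` or `g⁻¹*a ∉ A`. -/
def IsDiffuse (G : Type*) [Group G] : Prop :=
  ∀ A : Finset G, A.Nonempty →
    ∃ a ∈ A, ∀ g : G, g ≠ 1 → g * a ∉ A ∨ g⁻¹ * a ∉ A

/-- For every natural number `k`, the free abelian group `ℤᵏ` is diffuse. -/
theorem zk_isDiffuse (k : ℕ) : IsDiffuse (Multiplicative (Fin k → ℤ)) := by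
  intro A hA
  obtain ⟨a, ha, hmax⟩ := A.exists_max_image
    (fun x => ∑ i, (Multiplicative.toAdd x i) ^ 2) hA
  refine ⟨a, ha, fun g hg => ?_⟩
  by_contra! h
  have h1 := hmax _ h.1
  have h2 := hmax _ h.2
  have h3 : ∑ i, (Multiplicative.toAdd (g * a) i) ^ 2
      + ∑ i, (Multiplicative.toAdd (g⁻¹ * a) i) ^ 2
      = 2 * ∑ i, (Multiplicative.toAdd a i) ^ 2 + 2 * ∑ i, (Multiplicative.toAdd g i) ^ 2 := by
    rw [Finset.mul_sum, Finset.mul_sum, ← Finset.sum_add_distrib, ← Finset.sum_add_distrib]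
    refine Finset.sum_congr rfl fun i _ => ?_
    simp only [toAdd_mul, toAdd_inv, Pi.add_apply, Pi.neg_apply]
    ring
  have h4 : 0 < ∑ i, (Multiplicative.toAdd g i) ^ 2 := by
    have hne : ∃ i, Multiplicative.toAdd g i ≠ 0 := by
      by_contra! hz
      exact hg (Multiplicative.toAdd.injective (funext hz))
    obtain ⟨i, hi⟩ := hne
    exact Finset.sum_pos' (fun j _ => sq_nonneg _) ⟨i, Finset.mem_univ i, by positivity⟩
  linarith
end

section
/- Every diffuse group has the unique product property: for every two finite nonempty subsets A, B of the group there is an element x of the product set AB that can be written uniquely in the form x = ab with a ∈ A and b ∈ B. -/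
/-- Every diffuse group has the unique product property: for all finite nonempty subsets
`A, B` there is an element of `A*B` written uniquely as `a*b` with `a ∈ A`, `b ∈ B`. -/
theorem uniqueProduct_of_isDiffuse {G : Type*} [Group G] (hG : IsDiffuse G)
    (A B : Finset G) (hA : A.Nonempty) (hB : B.Nonempty) :
    ∃ a ∈ A, ∃ b ∈ B, ∀ a' ∈ A, ∀ b' ∈ B, a' * b' = a * b → a' = a ∧ b' = b := by
  classical
  obtain ⟨c, hc, hext⟩ := hG ((A ×ˢ B).image fun p => p.1 * p.2) ((hA.product hB).image _)
  have hm : ∀ x ∈ A, ∀ y ∈ B, x * y ∈ (A ×ˢ B).image fun p => p.1 * p.2 :=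
    fun x hx y hy => Finset.mem_image.2 ⟨(x, y), Finset.mem_product.2 ⟨hx, hy⟩, rfl⟩
  obtain ⟨⟨a, b⟩, hab, rfl⟩ := Finset.mem_image.1 hc
  obtain ⟨ha, hb⟩ := Finset.mem_product.1 hab
  refine ⟨a, ha, b, hb, fun a' ha' b' hb' h => ?_⟩
  have key : a' = a := by
    by_contra hne
    rcases hext (a' * a⁻¹) (fun h1 => hne (mul_inv_eq_one.1 h1)) with h1 | h1
    · apply h1
      have := hm a' ha' b hb
      simpa only [mul_assoc, inv_mul_cancel_left] using this
    · apply h1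
      have := hm a ha b' hb'
      have e : (a' * a⁻¹)⁻¹ * (a * b) = a * b' := by
        rw [← h]; group
      exact e ▸ this
  subst key
  exact ⟨rfl, mul_left_cancel h⟩
end
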